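/- Let R₀ > 0 and ω ∈ ℝ. For 0 < r ≤ R₀ and ρ ∈ ℝ define a(r,ρ) := ρ² − r^{−4} + ω² r^{−2} and b(r,ρ) := −2ρ r^{−2} (the real and imaginary parts of the conjugated symbol p_φ(r,ρ) = (ρ − i r^{−2})² + ω²/r² with weight φ(r) = 1/r). Then (∂_ρ a)(r,ρ)·(∂_r b)(r,ρ) − (∂_r a)(r,ρ)·(∂_ρ b)(r,ρ) = 8ρ² r^{−3} + 8 r^{−7} − 4 ω² r^{−5}; in particular, on the characteristic set a = b = 0 (equivalently ρ = 0 and ω² = r^{−2}) this Poisson bracket equals 4 r^{−7} ≥ 4 R₀^{−7} > 0. -/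

import Mathlib

noncomputable section

/-- Real part of the conjugated symbol `p_φ(r,ρ) = (ρ − i r⁻²)² + ω²/r²`
with the radially decreasing Carleman weight `φ(r) = 1/r`. -/
def reSymb (ω r ρ : ℝ) : ℝ := ρ ^ 2 - r ^ (-4 : ℤ) + ω ^ 2 * r ^ (-2 : ℤ)

/-- Imaginary part of the conjugated symbol. -/
def imSymb (r ρ : ℝ) : ℝ := -2 * ρ * r ^ (-2 : ℤ)

/-- The Poisson bracket `{Re p_φ, Im p_φ} = ∂_ρ a · ∂_r b − ∂_r a · ∂_ρ b`. -/
def bracket (ω r ρ : ℝ) : ℝ :=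
  deriv (fun ρ' => reSymb ω r ρ') ρ * deriv (fun r' => imSymb r' ρ) r -
    deriv (fun r' => reSymb ω r' ρ) r * deriv (fun ρ' => imSymb r ρ') ρ

theorem stmt5 (R₀ : ℝ) (hR₀ : 0 < R₀) (ω : ℝ) :
    ∀ r : ℝ, 0 < r → r ≤ R₀ → ∀ ρ : ℝ,
      bracket ω r ρ =
          8 * ρ ^ 2 * r ^ (-3 : ℤ) + 8 * r ^ (-7 : ℤ) - 4 * ω ^ 2 * r ^ (-5 : ℤ) ∧
        (reSymb ω r ρ = 0 → imSymb r ρ = 0 →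
          (ρ = 0 ∧ ω ^ 2 = r ^ (-2 : ℤ)) ∧
            bracket ω r ρ = 4 * r ^ (-7 : ℤ) ∧
            4 * r ^ (-7 : ℤ) ≥ 4 * R₀ ^ (-7 : ℤ) ∧
            (0 : ℝ) < 4 * R₀ ^ (-7 : ℤ)) := by
  intro r hr hrR ρ
  have hr0 : r ≠ 0 := hr.ne'
  have hz : ∀ n : ℤ, HasDerivAt (fun x : ℝ => x ^ n) ((n : ℝ) * r ^ (n - 1)) r :=
    fun n => hasDerivAt_zpow n r (Or.inl hr0)
  have h1 : deriv (fun ρ' => reSymb ω r ρ') ρ = 2 * ρ := by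
    have h : HasDerivAt (fun ρ' : ℝ => ρ' ^ 2 - r ^ (-4 : ℤ) + ω ^ 2 * r ^ (-2 : ℤ))
        (2 * ρ) ρ := by
      simpa using ((hasDerivAt_pow 2 ρ).sub_const (r ^ (-4 : ℤ))).add_const
        (ω ^ 2 * r ^ (-2 : ℤ))
    exact h.deriv
  have h2 : deriv (fun r' => imSymb r' ρ) r =
      -2 * ρ * (((-2 : ℤ) : ℝ) * r ^ ((-2 : ℤ) - 1)) :=
    ((hz (-2)).const_mul (-2 * ρ)).deriv
  have h3 : deriv (fun r' => reSymb ω r' ρ) r =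
      -(((-4 : ℤ) : ℝ) * r ^ ((-4 : ℤ) - 1)) +
        ω ^ 2 * (((-2 : ℤ) : ℝ) * r ^ ((-2 : ℤ) - 1)) :=
    (((hz (-4)).const_sub (ρ ^ 2)).add ((hz (-2)).const_mul (ω ^ 2))).deriv
  have h4 : deriv (fun ρ' => imSymb r ρ') ρ = -2 * 1 * r ^ (-2 : ℤ) :=
    (((hasDerivAt_id ρ).const_mul (-2)).mul_const (r ^ (-2 : ℤ))).deriv
  have e7 : r ^ (-7 : ℤ) = r ^ (-5 : ℤ) * r ^ (-2 : ℤ) := by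
    rw [← zpow_add₀ hr0]; norm_num
  have e5 : r ^ (-5 : ℤ) = r ^ (-3 : ℤ) * r ^ (-2 : ℤ) := by
    rw [← zpow_add₀ hr0]; norm_num
  have e4 : r ^ (-4 : ℤ) = r ^ (-2 : ℤ) * r ^ (-2 : ℤ) := by
    rw [← zpow_add₀ hr0]; norm_num
  have hb : bracket ω r ρ =
      8 * ρ ^ 2 * r ^ (-3 : ℤ) + 8 * r ^ (-7 : ℤ) - 4 * ω ^ 2 * r ^ (-5 : ℤ) := by
    unfold bracket
    rw [h1, h2, h3, h4, show (-2 : ℤ) - 1 = -3 by norm_num,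
      show (-4 : ℤ) - 1 = -5 by norm_num, e7, e5]
    push_cast
    ring
  refine ⟨hb, fun ha hi => ?_⟩
  have p2 : r ^ (-2 : ℤ) ≠ 0 := zpow_ne_zero _ hr0
  have hρ : ρ = 0 := by
    unfold imSymb at hi
    simpa [hr0] using hi
  have hω : ω ^ 2 = r ^ (-2 : ℤ) := by
    unfold reSymb at ha
    rw [hρ, e4] at ha
    apply mul_right_cancel₀ p2
    linarith
  refine ⟨⟨hρ, hω⟩, ?_, ?_, by positivity⟩
  · rw [hb, hρ, hω, e7]; ring
  · have : R₀ ^ (-7 : ℤ) ≤ r ^ (-7 : ℤ) := by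
      rw [zpow_neg, zpow_neg]
      apply inv_anti₀ (by positivity)
      exact zpow_le_zpow_left₀ (by norm_num) hr.le hrR
    linarith
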